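/- arXiv:2303.16455 — 2 statements merged into one kernel-verified Lean document; each statement's English description precedes it below -/
import Mathlib

section
/- Let v ∈ ℝ, σ₁ > 0, σ₂ > 0 and σ₁₂ ∈ ℝ with |σ₁₂| < σ₁·σ₂, and set ρ = σ₁₂/(σ₁·σ₂). The function s₁₂ ↦ p₁₂(v/σ₁, v/σ₂, s₁₂/(σ₁·σ₂)) (the orthant probability as a function of the covariance, with σ₁ and σ₂ held fixed) is differentiable at s₁₂ = σ₁₂ and its derivative there equals (1/(σ₁·σ₂))·f(v/σ₁, v/σ₂|ρ). -/
open MeasureTheory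

/-- The Gaussian tail function `Q(a) = ∫_a^∞ φ(t) dt`, where `φ` is the standard
normal density. -/
noncomputable def Qtail (a : ℝ) : ℝ :=
  ∫ t in Set.Ioi a, (1 / Real.sqrt (2 * Real.pi)) * Real.exp (-t ^ 2 / 2)

/-- The standardized bivariate Gaussian density `f(y₁,y₂|ρ)` with correlation
coefficient `ρ`. -/
noncomputable def biGauss (y₁ y₂ ρ : ℝ) : ℝ :=
  (1 / (2 * Real.pi * Real.sqrt (1 - ρ ^ 2))) *
    Real.exp (-(y₁ ^ 2 - 2 * ρ * y₁ * y₂ + y₂ ^ 2) / (2 * (1 - ρ ^ 2)))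

/-- The orthant probability `p₁₂(a,b,ρ) = ∫_a^∞ ∫_b^∞ f(y₁,y₂|ρ) dy₂ dy₁`. -/
noncomputable def orthantProb (a b ρ : ℝ) : ℝ :=
  ∫ y₁ in Set.Ioi a, ∫ y₂ in Set.Ioi b, biGauss y₁ y₂ ρ

/-- The function `g(κ₁,κ₂,ϱ)` from the paper. -/
noncomputable def gFun (κ₁ κ₂ ϱ : ℝ) : ℝ :=
  (κ₁ / Real.sqrt (2 * Real.pi)) * Real.exp (-κ₁ ^ 2 / 2) *
      Qtail ((κ₂ - ϱ * κ₁) / Real.sqrt (1 - ϱ ^ 2))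
    - ϱ * biGauss κ₁ κ₂ ϱ

/-- standard normal density -/
noncomputable def phiAux (t : ℝ) : ℝ :=
  (1 / Real.sqrt (2 * Real.pi)) * Real.exp (-t ^ 2 / 2)

lemma phiAux_cont : Continuous phiAux := by unfold phiAux; fun_prop

lemma phiAux_pos (t : ℝ) : 0 < phiAux t := by unfold phiAux; positivity

lemma phiAux_integrable : Integrable phiAux := by
  have h := (integrable_exp_neg_mul_sq (b := 1/2) (by norm_num)).const_mul (1 / Real.sqrt (2 * Real.pi))
  refine h.congr (Filter.Eventually.of_forall fun t => ?_)
  simp only [phiAux]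
  congr 2; ring

lemma phiAux_mul_integrable : Integrable (fun t => t * phiAux t) := by
  have h := (integrable_mul_exp_neg_mul_sq (b := 1/2) (by norm_num)).const_mul (1 / Real.sqrt (2 * Real.pi))
  refine h.congr (Filter.Eventually.of_forall fun t => ?_)
  simp only [phiAux]
  rw [show -(1/2 : ℝ) * t ^ 2 = -t^2/2 by ring]; ring

lemma phiAux_le_one (t : ℝ) : phiAux t ≤ 1 := by
  unfold phiAux
  have h1 : Real.exp (-t ^ 2 / 2) ≤ 1 := Real.exp_le_one_iff.2 (by nlinarith [sq_nonneg t])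
  have h2 : 1 ≤ Real.sqrt (2 * Real.pi) := by
    rw [Real.one_le_sqrt]; linarith [Real.pi_gt_three]
  have h3 : 1 / Real.sqrt (2 * Real.pi) ≤ 1 := by
    rw [div_le_one (by linarith)]; exact h2
  exact mul_le_one₀ h3 (Real.exp_pos _).le h1

lemma Qtail_eq (a : ℝ) : Qtail a = ∫ t in Set.Ioi a, phiAux t := rfl

lemma Qtail_hasDerivAt (a : ℝ) : HasDerivAt Qtail (-phiAux a) a := by
  have h : Qtail = fun x => Qtail 0 - ∫ t in (0:ℝ)..x, phiAux t := by
    funext x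
    rw [Qtail_eq, Qtail_eq, ← intervalIntegral.integral_Ioi_sub_Ioi'
      phiAux_integrable.integrableOn phiAux_integrable.integrableOn]
    ring
  rw [h]
  have := (phiAux_cont.integral_hasStrictDerivAt 0 a).hasDerivAt
  simpa using this.const_sub (Qtail 0)

lemma Qtail_cont : Continuous Qtail :=
  continuous_iff_continuousAt.2 fun a => (Qtail_hasDerivAt a).continuousAt

lemma Qtail_norm_le (a : ℝ) : ‖Qtail a‖ ≤ ∫ t, phiAux t := by
  rw [Qtail_eq, Real.norm_of_nonneg (integral_nonneg fun t => (phiAux_pos t).le)]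
  exact setIntegral_le_integral phiAux_integrable
    (Filter.Eventually.of_forall fun t => (phiAux_pos t).le)

lemma biGauss_eq (y t ρ : ℝ) (h : 0 < 1 - ρ ^ 2) :
    biGauss y t ρ = phiAux y *
      (phiAux ((t - ρ * y) / Real.sqrt (1 - ρ ^ 2)) / Real.sqrt (1 - ρ ^ 2)) := by
  unfold biGauss phiAux
  have hs : 0 < Real.sqrt (1 - ρ ^ 2) := Real.sqrt_pos.2 h
  have h2 : Real.sqrt (2 * Real.pi) ^ 2 = 2 * Real.pi := Real.sq_sqrt (by positivity)
  have hK : 0 < Real.sqrt (2 * Real.pi) := by positivity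
  have he : Real.exp (-(y ^ 2 - 2 * ρ * y * t + t ^ 2) / (2 * (1 - ρ ^ 2))) =
      Real.exp (-y ^ 2 / 2) * Real.exp (-((t - ρ * y) / Real.sqrt (1 - ρ ^ 2)) ^ 2 / 2) := by
    rw [← Real.exp_add]
    congr 1
    rw [div_pow, Real.sq_sqrt h.le]
    field_simp
    ring
  rw [he]
  field_simp
  rw [h2]

lemma inner_eq (y b ρ : ℝ) (h : 0 < 1 - ρ ^ 2) :
    ∫ t in Set.Ioi b, biGauss y t ρ =
      phiAux y * Qtail ((b - ρ * y) / Real.sqrt (1 - ρ ^ 2)) := by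
  have hs : 0 < Real.sqrt (1 - ρ ^ 2) := Real.sqrt_pos.2 h
  set s := Real.sqrt (1 - ρ ^ 2) with hsd
  simp_rw [fun t => biGauss_eq y t ρ h]
  rw [← hsd, integral_const_mul]
  congr 1
  have h1 : ∫ t in Set.Ioi b, phiAux ((t - ρ * y) / s) / s =
      ∫ t in Set.Ioi (b - ρ * y), phiAux (t / s) / s := by
    have := (measurePreserving_sub_right volume (ρ * y)).setIntegral_preimage_emb
      (MeasurableEquiv.subRight (ρ * y)).measurableEmbedding
      (fun t => phiAux (t / s) / s) (Set.Ioi (b - ρ * y))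
    rw [← this]
    congr 2
    ext t; simp
  rw [h1, integral_div]
  have h2 := integral_comp_mul_right_Ioi phiAux (b - ρ * y) (inv_pos.2 hs)
  simp only [← div_eq_mul_inv, inv_inv, smul_eq_mul] at h2
  rw [h2, Qtail_eq]
  field_simp

lemma biGauss_symm (y t ρ : ℝ) : biGauss y t ρ = biGauss t y ρ := by
  unfold biGauss
  congr 3; ring

lemma arg_hasDerivAt (y b ρ : ℝ) (h : 0 < 1 - ρ ^ 2) :
    HasDerivAt (fun r : ℝ => (b - r * y) / Real.sqrt (1 - r ^ 2))
      ((ρ * b - y) / Real.sqrt (1 - ρ ^ 2) ^ 3) ρ := by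
  have hs : 0 < Real.sqrt (1 - ρ ^ 2) := Real.sqrt_pos.2 h
  have hsq : Real.sqrt (1 - ρ ^ 2) ^ 2 = 1 - ρ ^ 2 := Real.sq_sqrt h.le
  have h1 : HasDerivAt (fun r : ℝ => 1 - r ^ 2) (-(2 * ρ)) ρ := by
    simpa using (hasDerivAt_pow 2 ρ).const_sub 1
  have h2 := h1.sqrt h.ne'
  have h3 : HasDerivAt (fun r : ℝ => b - r * y) (-y) ρ := by
    simpa using ((hasDerivAt_id ρ).mul_const y).const_sub b
  refine (h3.div h2 hs.ne').congr_deriv ?_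
  have e : -y * Real.sqrt (1 - ρ ^ 2) - (b - ρ * y) * (-(2 * ρ) / (2 * Real.sqrt (1 - ρ ^ 2))) =
      (ρ * b - y) / Real.sqrt (1 - ρ ^ 2) := by
    rw [eq_div_iff hs.ne']
    have : (-y * Real.sqrt (1 - ρ ^ 2) - (b - ρ * y) * (-(2 * ρ) / (2 * Real.sqrt (1 - ρ ^ 2)))) *
        Real.sqrt (1 - ρ ^ 2) = -y * Real.sqrt (1 - ρ ^ 2) ^ 2 + (b - ρ * y) * ρ := by
      generalize Real.sqrt (1 - ρ ^ 2) = s at hs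
      field_simp
      ring
    rw [this, hsq]; ring
  rw [e, div_div]
  congr 1; ring

lemma orthant_aux (a b ρ : ℝ) (hρ : |ρ| < 1) :
    HasDerivAt (fun r => orthantProb a b r) (biGauss a b ρ) ρ := by
  obtain ⟨r, hr1, hr2⟩ := exists_between hρ
  have hr0 : 0 < r := (abs_nonneg ρ).trans_lt hr1
  have hS : Set.Ioo (-r) r ∈ nhds ρ := Ioo_mem_nhds (by linarith [neg_abs_le ρ]) (by linarith [le_abs_self ρ])
  have hC : 0 < 1 - r ^ 2 := by nlinarith
  have hpos' : ∀ x ∈ Set.Ioo (-r) r, 1 - r ^ 2 ≤ 1 - x ^ 2 := by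
    intro x hx; nlinarith [hx.1, hx.2]
  have hpos : ∀ x ∈ Set.Ioo (-r) r, 0 < 1 - x ^ 2 := fun x hx => hC.trans_le (hpos' x hx)
  have hρ2 : 0 < 1 - ρ ^ 2 := hpos ρ (mem_of_mem_nhds hS)
  have hcs : 0 < Real.sqrt (1 - r ^ 2) := Real.sqrt_pos.2 hC
  have key := hasDerivAt_integral_of_dominated_loc_of_deriv_le (μ := volume.restrict (Set.Ioi a))
    (F := fun (x y : ℝ) => phiAux y * Qtail ((b - x * y) / Real.sqrt (1 - x ^ 2)))
    (F' := fun (x y : ℝ) => phiAux y * (-phiAux ((b - x * y) / Real.sqrt (1 - x ^ 2)) *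
      ((x * b - y) / Real.sqrt (1 - x ^ 2) ^ 3)))
    (bound := fun y => (|b| * phiAux y + ‖y * phiAux y‖) * (1 / Real.sqrt (1 - r ^ 2) ^ 3))
    (x₀ := ρ) hS ?_ ?_ ?_ ?_ ?_ ?_
  rotate_left
  · refine Filter.Eventually.of_forall fun x => Continuous.aestronglyMeasurable ?_
    exact phiAux_cont.mul (Qtail_cont.comp (by fun_prop))
  · refine (phiAux_integrable.mul_bdd (c := ∫ t, phiAux t) ?_ ?_).integrableOn
    · exact (Qtail_cont.comp (by fun_prop)).aestronglyMeasurable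
    · exact Filter.Eventually.of_forall fun y => Qtail_norm_le _
  · refine Continuous.aestronglyMeasurable ?_
    exact phiAux_cont.mul ((phiAux_cont.comp (by fun_prop)).neg.mul (by fun_prop))
  · refine Filter.Eventually.of_forall fun y x hx => ?_
    have hle : Real.sqrt (1 - r ^ 2) ≤ Real.sqrt (1 - x ^ 2) := Real.sqrt_le_sqrt (hpos' x hx)
    have hxs : 0 < Real.sqrt (1 - x ^ 2) := hcs.trans_le hle
    have hx1 : |x| ≤ 1 := abs_le.2 ⟨by linarith [hx.1], by linarith [hx.2]⟩
    have hp := phiAux_pos y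
    have hq := phiAux_pos ((b - x * y) / Real.sqrt (1 - x ^ 2))
    have hq1 := phiAux_le_one ((b - x * y) / Real.sqrt (1 - x ^ 2))
    have e : |x * b - y| ≤ |b| + |y| := by
      calc |x * b - y| ≤ |x * b| + |y| := abs_sub _ _
        _ ≤ _ := by rw [abs_mul]; nlinarith [abs_nonneg b]
    have e3 : 1 / Real.sqrt (1 - x ^ 2) ^ 3 ≤ 1 / Real.sqrt (1 - r ^ 2) ^ 3 := by gcongr
    simp only [Real.norm_eq_abs, abs_mul, abs_div, abs_neg, abs_of_pos hp, abs_of_pos hq,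
      abs_of_pos (pow_pos hxs 3)]
    calc _ ≤ phiAux y * (1 * ((|b| + |y|) / Real.sqrt (1 - r ^ 2) ^ 3)) := by gcongr
      _ = _ := by ring
  · exact (((phiAux_integrable.const_mul |b|).add phiAux_mul_integrable.norm).mul_const _).integrableOn
  · refine Filter.Eventually.of_forall fun y x hx => ?_
    exact ((Qtail_hasDerivAt _).comp x (arg_hasDerivAt y b x (hpos x hx))).const_mul (phiAux y)
  obtain ⟨hint, hder⟩ := key
  have heq : (fun r => orthantProb a b r) =ᶠ[nhds ρ] fun x =>
      ∫ y in Set.Ioi a, phiAux y * Qtail ((b - x * y) / Real.sqrt (1 - x ^ 2)) := by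
    filter_upwards [hS] with x hx
    unfold orthantProb
    simp_rw [fun y => inner_eq y b x (hpos x hx)]
  refine HasDerivAt.congr_of_eventuallyEq ?_ heq
  convert hder using 1
  have hs : 0 < Real.sqrt (1 - ρ ^ 2) := Real.sqrt_pos.2 hρ2
  have hsq : Real.sqrt (1 - ρ ^ 2) ^ 2 = 1 - ρ ^ 2 := Real.sq_sqrt hρ2.le
  rw [integral_Ioi_of_hasDerivAt_of_tendsto' (f := fun y => -biGauss y b ρ) (m := 0) ?_ hint ?_]
  · ring
  · intro y _
    have h1 : HasDerivAt (fun y : ℝ => -(y ^ 2 - 2 * ρ * y * b + b ^ 2) / (2 * (1 - ρ ^ 2)))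
        (-(2 * y - 2 * ρ * b) / (2 * (1 - ρ ^ 2))) y := by
      have h0 : HasDerivAt (fun y : ℝ => y ^ 2 - 2 * ρ * y * b + b ^ 2) (2 * y - 2 * ρ * b) y := by
        have := (((hasDerivAt_pow 2 y).sub (((hasDerivAt_id y).const_mul (2 * ρ)).mul_const b)).add_const (b ^ 2))
        simpa using this
      exact h0.neg.div_const _
    have h2 := (h1.exp.const_mul (1 / (2 * Real.pi * Real.sqrt (1 - ρ ^ 2)))).neg
    refine h2.congr_deriv ?_
    have e := biGauss_eq y b ρ hρ2
    have e2 : phiAux y * (-phiAux ((b - ρ * y) / Real.sqrt (1 - ρ ^ 2)) *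
      ((ρ * b - y) / Real.sqrt (1 - ρ ^ 2) ^ 3)) = biGauss y b ρ * ((y - ρ * b) / (1 - ρ ^ 2)) := by
      rw [e, show (y - ρ * b) / (1 - ρ ^ 2) = (y - ρ * b) / Real.sqrt (1 - ρ ^ 2) ^ 2 by rw [hsq]]
      generalize phiAux y = A
      generalize phiAux _ = B
      generalize Real.sqrt (1 - ρ ^ 2) = s at hs
      field_simp
      ring
    rw [e2]
    unfold biGauss
    field_simp
  · have ht : Filter.Tendsto phiAux Filter.atTop (nhds 0) := by
      have : Filter.Tendsto (fun t : ℝ => -t ^ 2 / 2) Filter.atTop Filter.atBot := by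
        have h := (Filter.tendsto_pow_atTop (α := ℝ) (n := 2) (by norm_num)).atTop_div_const (r := 2) (by norm_num)
        exact (Filter.tendsto_neg_atTop_atBot.comp h).congr fun t => by simp [neg_div]
      have h := (Real.tendsto_exp_atBot.comp this).const_mul (1 / Real.sqrt (2 * Real.pi))
      rw [mul_zero] at h
      exact h
    have hu : Filter.Tendsto (fun y => phiAux y * (1 / Real.sqrt (1 - ρ ^ 2))) Filter.atTop (nhds 0) := by
      simpa using ht.mul_const (1 / Real.sqrt (1 - ρ ^ 2))
    have : Filter.Tendsto (fun y => biGauss y b ρ) Filter.atTop (nhds 0) := by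
      refine squeeze_zero (fun y => ?_) (fun y => ?_) hu
      · unfold biGauss; positivity
      · rw [biGauss_eq y b ρ hρ2]
        have hp := phiAux_pos y
        have := phiAux_le_one ((b - ρ * y) / Real.sqrt (1 - ρ ^ 2))
        gcongr
    simpa using this.neg

/-- Let `v ∈ ℝ`, `σ₁ > 0`, `σ₂ > 0` and `σ₁₂ ∈ ℝ` with
`|σ₁₂| < σ₁·σ₂`, and set `ρ = σ₁₂/(σ₁·σ₂)`. The function
`s₁₂ ↦ p₁₂(v/σ₁, v/σ₂, s₁₂/(σ₁·σ₂))` is differentiable at `s₁₂ = σ₁₂` and its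
derivative there equals `(1/(σ₁·σ₂))·f(v/σ₁, v/σ₂|ρ)`. -/
theorem orthantProb_hasDerivAt_sigma12 (v σ₁ σ₂ σ₁₂ : ℝ) (hσ₁ : 0 < σ₁) (hσ₂ : 0 < σ₂)
    (hσ₁₂ : |σ₁₂| < σ₁ * σ₂) :
    HasDerivAt (fun s₁₂ => orthantProb (v / σ₁) (v / σ₂) (s₁₂ / (σ₁ * σ₂)))
      ((1 / (σ₁ * σ₂)) * biGauss (v / σ₁) (v / σ₂) (σ₁₂ / (σ₁ * σ₂))) σ₁₂ := by
  have hp : 0 < σ₁ * σ₂ := mul_pos hσ₁ hσ₂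
  have h : |σ₁₂ / (σ₁ * σ₂)| < 1 := by
    rw [abs_div, abs_of_pos hp, div_lt_one hp]; exact hσ₁₂
  have h1 := orthant_aux (v / σ₁) (v / σ₂) _ h
  have h2 : HasDerivAt (fun s : ℝ => s / (σ₁ * σ₂)) (1 / (σ₁ * σ₂)) σ₁₂ :=
    (hasDerivAt_id σ₁₂).div_const _
  have h3 := h1.comp σ₁₂ h2
  exact h3.congr_deriv (mul_comm _ _)
end

section
/- Let v > 0 and σ > 0, and set p = Q(v/σ) ∈ (0, 1/2). The function h(a) = v/Q⁻¹(a), defined for a ∈ (0, 1/2), is twice differentiable at p and its second derivative there equals exp(v²/σ²)·(4π·σ³/v² − 2π·σ). -/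
open MeasureTheory

/-- The inverse of the Gaussian tail function `Q` (`Q` is a strictly decreasing
bijection from `ℝ` onto `(0,1)`). -/
noncomputable def Qinv : ℝ → ℝ := Function.invFun Qtail

noncomputable def gaussPhi (t : ℝ) : ℝ :=
  (1 / Real.sqrt (2 * Real.pi)) * Real.exp (-t ^ 2 / 2)

lemma gaussPhi_pos (t : ℝ) : 0 < gaussPhi t := by
  unfold gaussPhi; positivity

lemma gaussPhi_cont : Continuous gaussPhi := by
  unfold gaussPhi; fun_prop

lemma gaussPhi_integrable : Integrable gaussPhi := by
  have h := (integrable_exp_neg_mul_sq (b := 1 / 2) (by norm_num)).const_mul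
    (1 / Real.sqrt (2 * Real.pi))
  refine h.congr (Filter.Eventually.of_forall fun t => ?_)
  simp only [gaussPhi]
  congr 2
  ring

lemma Qtail_eq_s15 (x : ℝ) : Qtail x = Qtail 0 - ∫ t in (0 : ℝ)..x, gaussPhi t := by
  have h := intervalIntegral.integral_Ioi_sub_Ioi' (μ := volume) (f := gaussPhi) (a := 0) (b := x)
    gaussPhi_integrable.integrableOn gaussPhi_integrable.integrableOn
  rw [← h]
  simp only [Qtail, gaussPhi]
  ring

lemma Qtail_strict (x : ℝ) : HasStrictDerivAt Qtail (-gaussPhi x) x := by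
  have h := (gaussPhi_cont.integral_hasStrictDerivAt 0 x).const_sub (Qtail 0)
  have e : Qtail = fun x => Qtail 0 - ∫ t in (0 : ℝ)..x, gaussPhi t := funext Qtail_eq_s15
  rw [e]
  exact h

lemma Qtail_inj : Function.Injective Qtail := by
  have : StrictAnti Qtail := by
    apply strictAnti_of_deriv_neg
    intro x
    rw [(Qtail_strict x).hasDerivAt.deriv]
    linarith [gaussPhi_pos x]
  exact this.injective

lemma Qinv_Qtail (x : ℝ) : Qinv (Qtail x) = x :=
  Function.leftInverse_invFun Qtail_inj x

lemma Qtail_map (x : ℝ) : Filter.map Qtail (nhds x) = nhds (Qtail x) :=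
  (Qtail_strict x).map_nhds_eq (by linarith [gaussPhi_pos x] : -gaussPhi x < 0).ne

lemma Qinv_deriv (x : ℝ) : HasDerivAt Qinv (-gaussPhi x)⁻¹ (Qtail x) := by
  have hx := gaussPhi_pos x
  apply HasDerivAt.of_local_left_inverse (f := Qtail)
  · unfold ContinuousAt
    rw [Qinv_Qtail, ← Qtail_map, Filter.tendsto_map'_iff]
    exact Filter.tendsto_id.congr (fun y => (Qinv_Qtail y).symm)
  · rw [Qinv_Qtail]
    exact (Qtail_strict x).hasDerivAt
  · linarith
  · rw [← Qtail_map, Filter.eventually_map]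
    exact Filter.Eventually.of_forall fun y => by rw [Qinv_Qtail]

lemma gaussPhi_deriv (x : ℝ) : HasDerivAt gaussPhi (-x * gaussPhi x) x := by
  have h : HasDerivAt (fun t : ℝ => -t ^ 2 / 2) (-x) x := by
    have := ((hasDerivAt_pow 2 x).neg).div_const 2
    refine this.congr_deriv ?_
    norm_num
    ring
  have := (h.exp).const_mul (1 / Real.sqrt (2 * Real.pi))
  refine this.congr_deriv ?_
  unfold gaussPhi
  ring

/-- Let `v > 0` and `σ > 0`, and set `p = Q(v/σ) ∈ (0, 1/2)`. The
function `h(a) = v/Q⁻¹(a)` is twice differentiable at `p` and its second derivative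
there equals `exp(v²/σ²)·(4π·σ³/v² − 2π·σ)`. -/
theorem h_second_deriv (v σ : ℝ) (hv : 0 < v) (hσ : 0 < σ) :
    HasDerivAt (deriv (fun a => v / Qinv a))
      (Real.exp (v ^ 2 / σ ^ 2) * (4 * Real.pi * σ ^ 3 / v ^ 2 - 2 * Real.pi * σ))
      (Qtail (v / σ)) := by
  obtain ⟨x, hx⟩ : ∃ x, x = v / σ := ⟨_, rfl⟩
  have hx0 : 0 < x := by rw [hx]; positivity
  rw [← hx]
  have hp := gaussPhi_pos x
  have key : deriv (fun a => v / Qinv a) =ᶠ[nhds (Qtail x)]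
      (fun y => v / (y ^ 2 * gaussPhi y)) ∘ Qinv := by
    rw [← Qtail_map, Filter.EventuallyEq, Filter.eventually_map]
    filter_upwards [lt_mem_nhds hx0] with y hy
    have hyp := gaussPhi_pos y
    have h := (hasDerivAt_const (Qtail y) v).div (Qinv_deriv y) (by rw [Qinv_Qtail]; exact hy.ne')
    have h2 : deriv (fun a => v / Qinv a) (Qtail y) = _ := h.deriv
    rw [h2]
    simp only [Function.comp, Qinv_Qtail]
    field_simp
    ring
  refine HasDerivAt.congr_of_eventuallyEq ?_ key
  have hd := (hasDerivAt_const x v).div ((hasDerivAt_pow 2 x).mul (gaussPhi_deriv x))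
    (by simp only [Pi.mul_apply]; positivity)
  have hd' : HasDerivAt (fun y => v / (y ^ 2 * gaussPhi y))
      ((0 * (x ^ 2 * gaussPhi x) - v * (((2 : ℕ) : ℝ) * x ^ (2 - 1) * gaussPhi x
        + x ^ 2 * (-x * gaussPhi x))) / (x ^ 2 * gaussPhi x) ^ 2) (Qinv (Qtail x)) := by
    rw [Qinv_Qtail]; exact hd
  have hc := HasDerivAt.comp (Qtail x) hd' (Qinv_deriv x)
  refine hc.congr_deriv ?_
  have hE : Real.exp (v ^ 2 / σ ^ 2) * (2 * Real.pi) * gaussPhi x ^ 2 = 1 := by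
    have h1 : v ^ 2 / σ ^ 2 = x ^ 2 := by rw [hx]; ring
    have h2 : Real.exp (-x ^ 2 / 2) ^ 2 = Real.exp (-x ^ 2) := by
      rw [← Real.exp_nat_mul]; congr 1; push_cast; ring
    have h3 : Real.exp (x ^ 2) * Real.exp (-x ^ 2) = 1 := by
      rw [← Real.exp_add]; simp
    rw [h1, gaussPhi, mul_pow, h2, div_pow, Real.sq_sqrt (by positivity)]
    have := Real.pi_pos
    field_simp
    linear_combination h3
  have hE' : Real.exp (v ^ 2 / σ ^ 2) * (4 * Real.pi * σ ^ 3 / v ^ 2 - 2 * Real.pi * σ)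
      = (2 * σ ^ 3 / v ^ 2 - σ) / gaussPhi x ^ 2 := by
    rw [eq_div_iff (by positivity)]
    linear_combination (2 * σ ^ 3 / v ^ 2 - σ) * hE
  rw [hE']
  have hs : σ = v / x := by rw [hx]; field_simp
  rw [hs]
  norm_num
  field_simp
  ring
end
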